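/- For the continued fraction system associated to a finite alphabet A ⊂ ℕ with |A| ≥ 2, the distortion function τ = log|T'| has the non local integrability property: there exist an index j₀ ∈ A×A, two sequences ξ, η : ℕ → A×A, and points u₀, v₀ ∈ K ∩ I_{j₀}, such that the partial derivative ∂φ_{ξ,η}/∂u (u₀, v₀) is nonzero, where φ_{ξ,η}(u,v) = Δ_ξ(u,v) − Δ_η(u,v) and Δ_ξ(u,v) = Σ_{i=0}^{∞} [τ(γ_{ξ_i} ∘ γ_{ξ_{i−1}} ∘ ⋯ ∘ γ_{ξ_0}(u)) − τ(γ_{ξ_i} ∘ γ_{ξ_{i−1}} ∘ ⋯ ∘ γ_{ξ_0}(v))] (these series converge and define C¹ functions on I_{j₀} × I_{j₀}). -/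

import Mathlib

/-- The Möbius map of `g_a = [[0,1],[1,a]]` on `ℝ`: `x ↦ 1/(x+a)`. -/
noncomputable def gmap (a : ℕ) (x : ℝ) : ℝ := 1 / (x + (a : ℝ))

/-- The Möbius map `γ_j` of `g_a g_{a'}` for `j = (a,a')`: `x ↦ g_a(g_{a'}(x))`. -/
noncomputable def gam (j : ℕ × ℕ) (x : ℝ) : ℝ := gmap j.1 (gmap j.2 x)

/-- The interval `I_j = γ_j([1/(A_max+1), 1])`, where `A_max = max A` (here `A.sup id`). -/
noncomputable def Ij (A : Finset ℕ) (j : ℕ × ℕ) : Set ℝ :=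
  gam j '' Set.Icc (1 / (((A.sup id : ℕ) : ℝ) + 1)) 1

/-- `I = ⋃_{j ∈ A×A} I_j`. -/
noncomputable def IA (A : Finset ℕ) : Set ℝ :=
  ⋃ j ∈ (A ×ˢ A : Finset (ℕ × ℕ)), Ij A j

open Classical in
/-- The expanding Markov map `T : I → ℝ`, given on `I_j`, `j = (a,a')`, by the inverse
branch `T = γ_j⁻¹ : x ↦ 1/(1/x − a) − a'` (and defined as `0` off `I`). -/
noncomputable def Tmap (A : Finset ℕ) (x : ℝ) : ℝ :=
  if h : ∃ j : ℕ × ℕ, j ∈ A ×ˢ A ∧ x ∈ Ij A j then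
    1 / (1 / x - (h.choose.1 : ℝ)) - (h.choose.2 : ℝ)
  else 0

/-- The invariant Cantor set `K = ⋂_{i ≥ 0} T^{−i}(I)`. -/
noncomputable def KA (A : Finset ℕ) : Set ℝ :=
  ⋂ n : ℕ, (Tmap A)^[n] ⁻¹' IA A

open Classical in
/-- The distortion function `τ = log |T'|`. On `I_j`, `j = (a,a')`, the branch
`T = γ_j⁻¹` has `T'(x) = (1 − a x)⁻²`, so `τ(x) = log|T'(x)| = −2 log|1 − a x|`
(and `τ = 0` off `I`). -/
noncomputable def tauA (A : Finset ℕ) (x : ℝ) : ℝ :=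
  if h : ∃ j : ℕ × ℕ, j ∈ A ×ˢ A ∧ x ∈ Ij A j then
    -2 * Real.log |1 - (h.choose.1 : ℝ) * x|
  else 0

open Classical in
/-- `|T'|`: on `I_j`, `j = (a,a')`, the branch derivative of `T = γ_j⁻¹` in absolute
value, `|T'(x)| = (1 − a x)⁻²` (and `0` off `I`), so that by the chain rule
`|(T^N)'(z)| = ∏_{i<N} |T'(T^i z)|`. -/
noncomputable def TderivAbs (A : Finset ℕ) (x : ℝ) : ℝ :=
  if h : ∃ j : ℕ × ℕ, j ∈ A ×ˢ A ∧ x ∈ Ij A j then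
    ((1 - (h.choose.1 : ℝ) * x)⁻¹) ^ 2
  else 0

/-- The orbit `γ_{ξ_i} ∘ γ_{ξ_{i−1}} ∘ ⋯ ∘ γ_{ξ_0}(u)` of `u` under the inverse branches
determined by the sequence `ξ`. -/
noncomputable def branchOrbit (ξ : ℕ → ℕ × ℕ) (u : ℝ) : ℕ → ℝ
  | 0 => gam (ξ 0) u
  | n + 1 => gam (ξ (n + 1)) (branchOrbit ξ u n)

/-- `Δ_ξ(u,v) = Σ_{i≥0} [τ(γ_{ξ_i} ∘ ⋯ ∘ γ_{ξ_0}(u)) − τ(γ_{ξ_i} ∘ ⋯ ∘ γ_{ξ_0}(v))]`. -/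
noncomputable def DeltaFn (A : Finset ℕ) (ξ : ℕ → ℕ × ℕ) (u v : ℝ) : ℝ :=
  ∑' i : ℕ, (tauA A (branchOrbit ξ u i) - tauA A (branchOrbit ξ v i))

/-- The temporal distance function `φ_{ξ,η}(u,v) = Δ_ξ(u,v) − Δ_η(u,v)`. -/
noncomputable def phiFn (A : Finset ℕ) (ξ η : ℕ → ℕ × ℕ) (u v : ℝ) : ℝ :=
  DeltaFn A ξ u v - DeltaFn A η u v

section Helpers

theorem aux_gmap_inj {a b : ℕ} {x y : ℝ} (hx : 0 < x) (hx1 : x ≤ 1) (hy : 0 < y) (hy1 : y ≤ 1)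
    (h : gmap a x = gmap b y) : a = b ∧ x = y := by
  unfold gmap at h
  have ha : (0 : ℝ) ≤ a := Nat.cast_nonneg a
  have hb : (0 : ℝ) ≤ b := Nat.cast_nonneg b
  have h2 : x + a = y + b := by
    have := congrArg (fun t : ℝ => t⁻¹) h
    simpa using this
  have h3 : (a : ℝ) < b + 1 := by linarith
  have h4 : (b : ℝ) < a + 1 := by linarith
  have h5 : a < b + 1 := by exact_mod_cast h3
  have h6 : b < a + 1 := by exact_mod_cast h4
  have h7 : a = b := by omega
  subst h7
  exact ⟨rfl, by linarith⟩

theorem aux_gmap_mem {M a : ℕ} (ha : 1 ≤ a) (haM : a ≤ M) {y : ℝ}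
    (hy : y ∈ Set.Icc (1 / ((M : ℝ) + 1)) 1) :
    gmap a y ∈ Set.Icc (1 / ((M : ℝ) + 1)) 1 := by
  have hM : (0 : ℝ) < (M : ℝ) + 1 := by positivity
  have h0 : 0 < 1 / ((M : ℝ) + 1) := by positivity
  have ha' : (1 : ℝ) ≤ a := by exact_mod_cast ha
  have haM' : (a : ℝ) ≤ M := by exact_mod_cast haM
  obtain ⟨h1, h2⟩ := hy
  unfold gmap
  constructor
  · apply one_div_le_one_div_of_le <;> linarith
  · rw [div_le_one] <;> linarith

theorem aux_pos {M : ℕ} {y : ℝ} (hy : y ∈ Set.Icc (1 / ((M : ℝ) + 1)) 1) : 0 < y :=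
  lt_of_lt_of_le (by positivity) hy.1

theorem aux_le_sup {A : Finset ℕ} {a : ℕ} (ha : a ∈ A) : a ≤ A.sup id :=
  Finset.le_sup (f := id) ha

theorem aux_gam_mem {A : Finset ℕ} (hA1 : ∀ a ∈ A, 1 ≤ a) {j : ℕ × ℕ} (hj : j ∈ A ×ˢ A) {y : ℝ}
    (hy : y ∈ Set.Icc (1 / (((A.sup id : ℕ) : ℝ) + 1)) 1) :
    gam j y ∈ Set.Icc (1 / (((A.sup id : ℕ) : ℝ) + 1)) 1 := by
  rw [Finset.mem_product] at hj
  exact aux_gmap_mem (hA1 _ hj.1) (aux_le_sup hj.1)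
    (aux_gmap_mem (hA1 _ hj.2) (aux_le_sup hj.2) hy)

theorem aux_Ij_unique {A : Finset ℕ} (hA1 : ∀ a ∈ A, 1 ≤ a) {j k : ℕ × ℕ} (hj : j ∈ A ×ˢ A)
    (hk : k ∈ A ×ˢ A) {x : ℝ} (hxj : x ∈ Ij A j) (hxk : x ∈ Ij A k) : j = k := by
  obtain ⟨y, hy, rfl⟩ := hxj
  obtain ⟨z, hz, hzy⟩ := hxk
  rw [Finset.mem_product] at hj hk
  have h1 := aux_gmap_mem (hA1 _ hj.2) (aux_le_sup hj.2) hy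
  have h2 := aux_gmap_mem (hA1 _ hk.2) (aux_le_sup hk.2) hz
  obtain ⟨e1, e2⟩ := aux_gmap_inj (aux_pos h2) h2.2 (aux_pos h1) h1.2 hzy
  obtain ⟨e3, e4⟩ := aux_gmap_inj (aux_pos hz) hz.2 (aux_pos hy) hy.2 e2
  exact Prod.ext e1.symm e3.symm

theorem aux_tau {A : Finset ℕ} (hA1 : ∀ a ∈ A, 1 ≤ a) {j : ℕ × ℕ} (hj : j ∈ A ×ˢ A) {x : ℝ}
    (hx : x ∈ Ij A j) : tauA A x = -2 * Real.log |1 - (j.1 : ℝ) * x| := by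
  have h : ∃ j : ℕ × ℕ, j ∈ A ×ˢ A ∧ x ∈ Ij A j := ⟨j, hj, hx⟩
  have e : h.choose = j := aux_Ij_unique hA1 h.choose_spec.1 hj h.choose_spec.2 hx
  unfold tauA
  rw [dif_pos h, e]

theorem aux_T {A : Finset ℕ} (hA1 : ∀ a ∈ A, 1 ≤ a) {j : ℕ × ℕ} (hj : j ∈ A ×ˢ A) {x : ℝ}
    (hx : x ∈ Ij A j) : Tmap A x = 1 / (1 / x - (j.1 : ℝ)) - (j.2 : ℝ) := by
  have h : ∃ j : ℕ × ℕ, j ∈ A ×ˢ A ∧ x ∈ Ij A j := ⟨j, hj, hx⟩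
  have e : h.choose = j := aux_Ij_unique hA1 h.choose_spec.1 hj h.choose_spec.2 hx
  unfold Tmap
  rw [dif_pos h, e]

/-- The quadratic irrational `θ = [a; a, a, …]`. -/
theorem aux_theta (a : ℕ) (ha : 1 ≤ a) :
    ∃ t : ℝ, (a : ℝ) < t ∧ t < a + 1 ∧ t * t = a * t + 1 := by
  have ha' : (1 : ℝ) ≤ a := by exact_mod_cast ha
  have hs : Real.sqrt ((a : ℝ) ^ 2 + 4) ^ 2 = (a : ℝ) ^ 2 + 4 := Real.sq_sqrt (by positivity)
  have hs0 := Real.sqrt_nonneg ((a : ℝ) ^ 2 + 4)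
  refine ⟨((a : ℝ) + Real.sqrt ((a : ℝ) ^ 2 + 4)) / 2, ?_, ?_, ?_⟩ <;> nlinarith

/-- The value of `τ ∘ γ` as a coboundary plus a constant. -/
theorem aux_cob {A : Finset ℕ} (hA1 : ∀ a ∈ A, 1 ≤ a) {a : ℕ} (ha : a ∈ A) {t : ℝ}
    (hta : (a : ℝ) < t) (ht : t * t = a * t + 1) {y : ℝ}
    (hy : y ∈ Set.Icc (1 / (((A.sup id : ℕ) : ℝ) + 1)) 1) :
    tauA A (gam (a, a) y) =
      2 * Real.log (t * t) + 2 * Real.log (y + t) - 2 * Real.log (gam (a, a) y + t) := by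
  have hj : (a, a) ∈ A ×ˢ A := by simp [ha]
  have hy0 := aux_pos hy
  have hg0 := aux_pos (aux_gam_mem hA1 hj hy)
  have ha' : (1 : ℝ) ≤ a := by exact_mod_cast hA1 a ha
  have ht0 : 0 < t := by linarith
  rw [aux_tau hA1 hj ⟨y, hy, rfl⟩]
  have e : gam (a, a) y = (y + a) / (a * (y + a) + 1) := by
    simp only [gam, gmap]
    field_simp
    ring
  have hp : 0 < (a : ℝ) * (y + a) + 1 := by positivity
  have e1 : 1 - (a : ℝ) * gam (a, a) y = (a * (y + a) + 1)⁻¹ := by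
    rw [e]; field_simp; ring
  have e2 : (a : ℝ) * (y + a) + 1 = t * t * (y + t) / (gam (a, a) y + t) := by
    rw [eq_div_iff (by positivity), e]
    field_simp
    linear_combination (-y - t - a) * ht
  simp only
  rw [e1, abs_of_pos (by positivity), Real.log_inv, e2, Real.log_div (by positivity)
    (by positivity), Real.log_mul (by positivity) (by positivity)]
  ring

theorem aux_contr {a : ℕ} (ha : 1 ≤ a) {x y : ℝ} (hx : 0 < x) (hy : 0 < y) :
    |gam (a, a) x - gam (a, a) y| ≤ (1 / 4) * |x - y| := by
  have ha' : (1 : ℝ) ≤ a := by exact_mod_cast ha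
  have e : gam (a, a) x - gam (a, a) y
      = (1 / ((a * (x + a) + 1) * (a * (y + a) + 1))) * (x - y) := by
    simp only [gam, gmap]
    field_simp
    ring
  rw [e, abs_mul]
  apply mul_le_mul_of_nonneg_right _ (abs_nonneg _)
  rw [abs_of_pos (by positivity)]
  apply one_div_le_one_div_of_le (by norm_num)
  have h1 : 2 ≤ (a : ℝ) * (x + a) + 1 := by nlinarith
  have h2 : 2 ≤ (a : ℝ) * (y + a) + 1 := by nlinarith
  nlinarith

theorem aux_log {x y t : ℝ} (hx : 0 < x) (hy : 0 < y) (ht : 1 ≤ t) :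
    |Real.log (x + t) - Real.log (y + t)| ≤ |x - y| := by
  have key : ∀ p q : ℝ, 0 < p → 0 < q → Real.log (p + t) - Real.log (q + t) ≤ |p - q| := by
    intro p q hp hq
    rw [← Real.log_div (by positivity) (by positivity)]
    have h1 := Real.log_le_sub_one_of_pos (x := (p + t) / (q + t)) (by positivity)
    have h2 : (p + t) / (q + t) - 1 = (p - q) / (q + t) := by field_simp; ring
    rw [h2] at h1
    refine h1.trans ?_
    rw [div_le_iff₀ (by positivity)]
    nlinarith [le_abs_self (p - q), abs_nonneg (p - q)]
  rw [abs_le]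
  have h1 := key x y hx hy
  have h2 := key y x hy hx
  rw [abs_sub_comm y x] at h2
  constructor <;> linarith

theorem aux_iter {a : ℕ} (u : ℝ) (i : ℕ) :
    branchOrbit (fun _ => (a, a)) u i = (gam (a, a))^[i + 1] u := by
  induction i with
  | zero => rfl
  | succ n ih => rw [Function.iterate_succ_apply', ← ih]; rfl

theorem aux_Delta {A : Finset ℕ} (hA1 : ∀ a ∈ A, 1 ≤ a) {a : ℕ} (ha : a ∈ A) {t : ℝ}
    (hta : (a : ℝ) < t) (ht : t * t = a * t + 1) {u v : ℝ}
    (hu : u ∈ Set.Icc (1 / (((A.sup id : ℕ) : ℝ) + 1)) 1)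
    (hv : v ∈ Set.Icc (1 / (((A.sup id : ℕ) : ℝ) + 1)) 1) :
    DeltaFn A (fun _ => (a, a)) u v = 2 * (Real.log (u + t) - Real.log (v + t)) := by
  have hj : (a, a) ∈ A ×ˢ A := by simp [ha]
  have ha' : (1 : ℝ) ≤ a := by exact_mod_cast hA1 a ha
  have hmem : ∀ w ∈ Set.Icc (1 / (((A.sup id : ℕ) : ℝ) + 1)) 1, ∀ i : ℕ,
      (gam (a, a))^[i] w ∈ Set.Icc (1 / (((A.sup id : ℕ) : ℝ) + 1)) 1 := by
    intro w hw i
    induction i with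
    | zero => exact hw
    | succ n ih => rw [Function.iterate_succ_apply']; exact aux_gam_mem hA1 hj ih
  set D : ℕ → ℝ := fun i => 2 * (Real.log ((gam (a, a))^[i] u + t)
    - Real.log ((gam (a, a))^[i] v + t)) with hD
  have hdist : ∀ i : ℕ, |(gam (a, a))^[i] u - (gam (a, a))^[i] v| ≤ |u - v| * (1 / 4) ^ i := by
    intro i
    induction i with
    | zero => simp
    | succ n ih =>
      rw [Function.iterate_succ_apply', Function.iterate_succ_apply']
      refine (aux_contr (hA1 a ha) (aux_pos (hmem u hu n)) (aux_pos (hmem v hv n))).trans ?_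
      rw [pow_succ]
      linarith
  have hsum : Summable D := by
    refine Summable.of_norm_bounded (g := fun i => 2 * (|u - v| * (1 / 4 : ℝ) ^ i)) ?_ ?_
    · exact ((summable_geometric_of_lt_one (by norm_num) (by norm_num)).mul_left _).mul_left _
    · intro i
      rw [Real.norm_eq_abs, hD]
      simp only
      rw [abs_mul, abs_two]
      have := (aux_log (aux_pos (hmem u hu i)) (aux_pos (hmem v hv i))
        (t := t) (by linarith)).trans (hdist i)
      linarith
  have hterm : ∀ i : ℕ, tauA A (branchOrbit (fun _ => (a, a)) u i)
      - tauA A (branchOrbit (fun _ => (a, a)) v i) = D i - D (i + 1) := by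
    intro i
    rw [aux_iter, aux_iter]
    simp only [hD, Function.iterate_succ_apply']
    rw [aux_cob hA1 ha hta ht (hmem u hu i), aux_cob hA1 ha hta ht (hmem v hv i)]
    ring
  unfold DeltaFn
  simp_rw [hterm]
  rw [hsum.tsum_sub ((summable_nat_add_iff 1).2 hsum), hsum.tsum_eq_zero_add]
  simp [hD]

end Helpers

/-- **Non local integrability (NLI) of the distortion function** for the continued
fraction system of a finite alphabet `A` of positive integers with `|A| ≥ 2`: there are
`j₀ ∈ A×A`, sequences `ξ, η : ℕ → A×A` and points `u₀, v₀ ∈ K ∩ I_{j₀}` with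
`∂φ_{ξ,η}/∂u (u₀,v₀) ≠ 0`. -/
theorem distortion_NLI (A : Finset ℕ) (hA : 2 ≤ A.card) (hA1 : ∀ a ∈ A, 1 ≤ a) :
    ∃ j₀ ∈ (A ×ˢ A : Finset (ℕ × ℕ)), ∃ ξ η : ℕ → ℕ × ℕ,
      (∀ n, ξ n ∈ A ×ˢ A) ∧ (∀ n, η n ∈ A ×ˢ A) ∧
      ∃ u₀ v₀ : ℝ, u₀ ∈ KA A ∩ Ij A j₀ ∧ v₀ ∈ KA A ∩ Ij A j₀ ∧
        deriv (fun u => phiFn A ξ η u v₀) u₀ ≠ 0 := by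
  obtain ⟨a, ha, b, hb, hab⟩ := Finset.one_lt_card.1 (show 1 < A.card by omega)
  obtain ⟨t, hta, hta1, ht⟩ := aux_theta a (hA1 a ha)
  obtain ⟨s, hsb, hsb1, hs⟩ := aux_theta b (hA1 b hb)
  have ha' : (1 : ℝ) ≤ a := by exact_mod_cast hA1 a ha
  have hb' : (1 : ℝ) ≤ b := by exact_mod_cast hA1 b hb
  have ht0 : 0 < t := by linarith
  have hs0 : 0 < s := by linarith
  have hM : (a : ℝ) ≤ ((A.sup id : ℕ) : ℝ) := by exact_mod_cast aux_le_sup ha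
  have hj : (a, a) ∈ A ×ˢ A := by simp [ha]
  have hgm : gmap a (1 / t) = 1 / t := by
    unfold gmap
    have : 1 / t + a = t := by field_simp; linarith
    rw [this]
  have hgam : gam (a, a) (1 / t) = 1 / t := by simp only [gam, hgm]
  have hIoo : 1 / t ∈ Set.Ioo (1 / (((A.sup id : ℕ) : ℝ) + 1)) 1 := by
    constructor
    · apply one_div_lt_one_div_of_lt <;> linarith
    · rw [div_lt_one] <;> linarith
  have hIcc := Set.Ioo_subset_Icc_self hIoo
  have hI : 1 / t ∈ Ij A (a, a) := ⟨1 / t, hIcc, hgam⟩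
  have hT : Tmap A (1 / t) = 1 / t := by
    rw [aux_T hA1 hj hI]
    have h1 : t - a ≠ 0 := by linarith
    simp only [one_div_one_div]
    rw [sub_eq_iff_eq_add, div_eq_iff h1]
    field_simp
    linear_combination (-(a : ℝ)) * ht
  have hK : 1 / t ∈ KA A := by
    unfold KA
    refine Set.mem_iInter.2 fun n => ?_
    rw [Set.mem_preimage, Function.iterate_fixed hT]
    exact Set.mem_biUnion hj hI
  refine ⟨(a, a), hj, fun _ => (a, a), fun _ => (b, b), fun _ => hj, fun _ => by simp [hb],
    1 / t, 1 / t, ⟨hK, hI⟩, ⟨hK, hI⟩, ?_⟩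
  have hev : (fun u => phiFn A (fun _ => (a, a)) (fun _ => (b, b)) u (1 / t)) =ᶠ[nhds (1 / t)]
      fun u => 2 * (Real.log (u + t) - Real.log (1 / t + t))
        - 2 * (Real.log (u + s) - Real.log (1 / t + s)) := by
    filter_upwards [isOpen_Ioo.mem_nhds hIoo] with u hu
    have hu' := Set.Ioo_subset_Icc_self hu
    rw [phiFn, aux_Delta hA1 ha hta ht hu' hIcc, aux_Delta hA1 hb hsb hs hu' hIcc]
  rw [hev.deriv_eq]
  have hp1 : 0 < 1 / t + t := by positivity
  have hp2 : 0 < 1 / t + s := by positivity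
  have hd : ∀ r : ℝ, 0 < 1 / t + r → HasDerivAt
      (fun u => 2 * (Real.log (u + r) - Real.log (1 / t + r))) (2 * (1 / (1 / t + r))) (1 / t) :=
    fun r hr => ((((hasDerivAt_id (1 / t)).add_const r).log hr.ne').sub_const _).const_mul 2
  have hd2 := ((hd t hp1).sub (hd s hp2)).deriv
  intro h
  have h := hd2.symm.trans h
  have h1 : 1 / (1 / t + t) = 1 / (1 / t + s) := by linarith
  rw [div_eq_div_iff hp1.ne' hp2.ne'] at h1
  have hts : t = s := by
    have := h1
    linarith
  subst hts
  have : (a : ℝ) * t = b * t := by linarith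
  have := mul_right_cancel₀ ht0.ne' this
  exact hab (by exact_mod_cast this)
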